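/- There exist effectively computable constants C' > 0 and N > 0 such that for all integers n > N and all integers l with 0 ≤ l ≤ n/(10·log n), one has |a(n,l) − (l+1)^{l+n−1}/(l+1)!| ≤ (C'/n²)·(l+1)^{l+n−1}/(l+1)!. In particular, a(n,l) = ((l+1)^{l+n−1}/(l+1)!)·exp(O(1/n²)) in this range. -/

import Mathlib

/-!
Fix `l` and put `r = l - k`. The term `r = 0` of `a n l` is the claimed main term, and the term `r`
is the main term for `k` times the coefficient of `x ^ r` in `exp (∑ C(n,k,i) x ^ i)`. Since
`|C(n,k,i)| ≤ (k + n) ^ (2 * i)`, this coefficient is at most `(e (k + n) ^ 2) ^ r`. Passing from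
the main term for `l` to the one for `k` costs the factor
`(1 - r / (l + 1)) ^ (n - 1) ≤ exp (-(n - 1) / (l + 1)) ^ r`, so the relative error is at most the
geometric sum `∑_{r ≥ 1} q ^ r` with `q = e (l + n) ^ 2 exp (-(n - 1) / (l + 1))`. If
`l ≤ n / (c log n)` with `c > α + 2`, the exponential is eventually at most `n ^ (-(α + 2))`, which
makes `q` of order `n ^ (-α)`.
-/

open Finset Real

/-- The constant `C(n,k,i)` from Aluffi–Marcolli–Nascimento. -/
noncomputable def Cnki (n k i : ℕ) : ℝ :=
  ((-1 : ℝ) ^ i * (2 * (k : ℝ) * i + n * i + k + n - 1) + (k : ℝ) - i) / (i * (i + 1))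
    - (1 / ((i : ℝ) * (k + 1) ^ i)) * ∑ j ∈ Finset.range (k + n - 1), (j : ℝ) ^ i

/-- The finite set of `m`-tuples of positive integers summing to `N`. -/
def posTuples (m N : ℕ) : Finset (Fin m → ℕ) :=
  (Fintype.piFinset fun _ => Finset.Icc 1 N).filter fun f => ∑ j, f j = N

/-- `a n l = rk H^{2l}(M̄_{0,n})`, via the Aluffi–Marcolli–Nascimento formula. -/
noncomputable def a (n l : ℕ) : ℝ :=
  ∑ k ∈ Finset.range (l + 1),
    ((k + 1 : ℝ) ^ (k + n - 1) / (Nat.factorial (k + 1) : ℝ)) *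
      ∑ m ∈ Finset.range (l - k + 1),
        (1 / (Nat.factorial m : ℝ)) *
          ∑ f ∈ posTuples m (l - k), ∏ j, Cnki n k (f j)

/-- The coefficient of `x ^ N` in the formal power series `exp (∑_{i ≥ 1} c i x ^ i)`, expanded over
the tuples of exponents; tuples of more than `N` positive integers do not contribute. -/
noncomputable def expCoeff (c : ℕ → ℝ) (N : ℕ) : ℝ :=
  ∑ m ∈ range (N + 1), (1 / (Nat.factorial m : ℝ)) * ∑ f ∈ posTuples m N, ∏ j, c (f j)

/-- The main term `(l + 1) ^ (l + n - 1) / (l + 1)!` of `a n l`. The exponent is a truncated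
difference, which matters only for `n = l = 0`. -/
noncomputable def leadingTerm (n l : ℕ) : ℝ :=
  (l + 1 : ℝ) ^ (l + n - 1) / (Nat.factorial (l + 1) : ℝ)

section ExpCoeff

variable {c : ℕ → ℝ} {B : ℝ} {m N : ℕ}

lemma mem_posTuples {f : Fin m → ℕ} :
    f ∈ posTuples m N ↔ (∀ j, 1 ≤ f j ∧ f j ≤ N) ∧ ∑ j, f j = N := by
  simp only [posTuples, mem_filter, Fintype.mem_piFinset, mem_Icc]

lemma card_posTuples_le (m N : ℕ) : #(posTuples m N) ≤ N ^ m :=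
  (card_filter_le _ _).trans (by simp)

lemma expCoeff_zero (c : ℕ → ℝ) : expCoeff c 0 = 1 := by
  simp [expCoeff, posTuples]

lemma abs_prod_le_pow_of_mem_posTuples (hc : ∀ i, 1 ≤ i → |c i| ≤ B ^ i) {f : Fin m → ℕ}
    (hf : f ∈ posTuples m N) : |∏ j, c (f j)| ≤ B ^ N := by
  obtain ⟨hpos, hsum⟩ := mem_posTuples.1 hf
  rw [abs_prod, ← hsum, ← prod_pow_eq_pow_sum]
  exact prod_le_prod (fun _ _ ↦ abs_nonneg _) fun j _ ↦ hc _ (hpos j).1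

lemma abs_sum_posTuples_le (hc : ∀ i, 1 ≤ i → |c i| ≤ B ^ i) (m N : ℕ) :
    |∑ f ∈ posTuples m N, ∏ j, c (f j)| ≤ (N : ℝ) ^ m * B ^ N := by
  have hB : 0 ≤ B := by simpa using (abs_nonneg _).trans (hc 1 le_rfl)
  have hcard : (#(posTuples m N) : ℝ) ≤ (N : ℝ) ^ m := mod_cast card_posTuples_le m N
  calc |∑ f ∈ posTuples m N, ∏ j, c (f j)|
      ≤ ∑ f ∈ posTuples m N, |∏ j, c (f j)| := abs_sum_le_sum_abs _ _
    _ ≤ #(posTuples m N) • B ^ N :=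
        sum_le_card_nsmul _ _ _ fun _ hf ↦ abs_prod_le_pow_of_mem_posTuples hc hf
    _ ≤ (N : ℝ) ^ m * B ^ N := by rw [nsmul_eq_mul]; gcongr

lemma abs_expCoeff_le (hc : ∀ i, 1 ≤ i → |c i| ≤ B ^ i) (N : ℕ) :
    |expCoeff c N| ≤ (exp 1 * B) ^ N := by
  have hB : 0 ≤ B := by simpa using (abs_nonneg _).trans (hc 1 le_rfl)
  calc |expCoeff c N|
      ≤ ∑ m ∈ range (N + 1), |1 / (Nat.factorial m : ℝ) * ∑ f ∈ posTuples m N, ∏ j, c (f j)| :=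
        abs_sum_le_sum_abs _ _
    _ ≤ ∑ m ∈ range (N + 1), 1 / (Nat.factorial m : ℝ) * ((N : ℝ) ^ m * B ^ N) := by
        gcongr with m _
        rw [abs_mul, abs_of_nonneg (by positivity : (0 : ℝ) ≤ 1 / Nat.factorial m)]
        gcongr
        exact abs_sum_posTuples_le hc m N
    _ = (∑ m ∈ range (N + 1), (N : ℝ) ^ m / Nat.factorial m) * B ^ N := by
        rw [sum_mul]
        exact sum_congr rfl fun m _ ↦ by ring
    _ ≤ exp N * B ^ N := by
        gcongr
        exact sum_le_exp_of_nonneg N.cast_nonneg _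
    _ = (exp 1 * B) ^ N := by rw [mul_pow, exp_one_pow]

end ExpCoeff

section Coefficients

variable {n k i : ℕ}

lemma sum_range_pow_le_pow_succ (t i : ℕ) : ∑ j ∈ range t, (j : ℝ) ^ i ≤ (t : ℝ) ^ (i + 1) := by
  have hterm : ∀ j ∈ range t, (j : ℝ) ^ i ≤ (t : ℝ) ^ i := fun j hj ↦ by
    gcongr
    exact (mem_range.1 hj).le
  calc ∑ j ∈ range t, (j : ℝ) ^ i ≤ #(range t) • (t : ℝ) ^ i := sum_le_card_nsmul _ _ _ hterm
    _ = (t : ℝ) ^ (i + 1) := by rw [card_range, nsmul_eq_mul, pow_succ']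

lemma abs_Cnki_rational_part_le (hn : 1 ≤ n) (hi : 1 ≤ i) :
    |((-1 : ℝ) ^ i * (2 * (k : ℝ) * i + n * i + k + n - 1) + (k : ℝ) - i) / (i * (i + 1))|
      ≤ 2 * k + n := by
  have hn' : (1 : ℝ) ≤ n := mod_cast hn
  have hi' : (1 : ℝ) ≤ i := mod_cast hi
  have hkn : (1 : ℝ) ≤ 2 * k + n := le_add_of_nonneg_of_le (by positivity) hn'
  have hpos : (0 : ℝ) ≤ 2 * (k : ℝ) * i + n * i + k + n - 1 := by
    have : (0 : ℝ) ≤ 2 * (k : ℝ) * i + n * i + k := by positivity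
    linarith
  have hsign : |(-1 : ℝ) ^ i * (2 * (k : ℝ) * i + n * i + k + n - 1)|
      = 2 * (k : ℝ) * i + n * i + k + n - 1 := by
    rw [abs_mul, abs_neg_one_pow, one_mul, abs_of_nonneg hpos]
  have hki : |(k : ℝ) - i| ≤ k + i := by
    simpa using abs_sub (k : ℝ) (i : ℝ)
  rw [abs_div, abs_of_pos (by positivity : (0 : ℝ) < i * (i + 1)), div_le_iff₀ (by positivity),
    add_sub_assoc]
  calc |(-1 : ℝ) ^ i * (2 * (k : ℝ) * i + n * i + k + n - 1) + (k - i)|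
      ≤ (2 * (k : ℝ) * i + n * i + k + n - 1) + (k + i) :=
        (abs_add_le _ _).trans (add_le_add hsign.le hki)
    _ = (2 * k + n) * (i * (i + 1)) - (i - 1) * ((2 * k + n) * (i + 1) - 1) := by ring
    _ ≤ (2 * k + n) * (i * (i + 1)) :=
        sub_le_self _ (mul_nonneg (sub_nonneg.2 hi')
          (sub_nonneg.2 (one_le_mul_of_one_le_of_one_le hkn (by linarith))))

lemma abs_Cnki_power_sum_part_le (hi : 1 ≤ i) :
    |1 / ((i : ℝ) * (k + 1) ^ i) * ∑ j ∈ range (k + n - 1), (j : ℝ) ^ i|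
      ≤ ((k + n - 1 : ℕ) : ℝ) ^ (i + 1) := by
  have hi' : (1 : ℝ) ≤ i := mod_cast hi
  have hden : 1 ≤ (i : ℝ) * (k + 1) ^ i :=
    one_le_mul_of_one_le_of_one_le hi' (one_le_pow₀ (by linarith [k.cast_nonneg (α := ℝ)]))
  rw [abs_of_nonneg (by positivity), one_div_mul_eq_div]
  exact (div_le_self (by positivity) hden).trans (sum_range_pow_le_pow_succ _ _)

lemma abs_Cnki_le (hn : 1 ≤ n) (hi : 1 ≤ i) : |Cnki n k i| ≤ ((k + n : ℝ) ^ 2) ^ i := by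
  obtain ⟨t, ht⟩ : ∃ t, k + n = t + 1 := ⟨k + n - 1, by omega⟩
  have hkn : (k + n : ℝ) = t + 1 := mod_cast ht
  have hrat : (2 * k + n : ℝ) ≤ (2 * t + 1) ^ i := by
    have hn' : (1 : ℝ) ≤ n := mod_cast hn
    have : (1 : ℝ) ≤ 2 * t + 1 := by linarith [t.cast_nonneg (α := ℝ)]
    linarith [le_self_pow₀ this (by omega : i ≠ 0)]
  have hsum : ((k + n - 1 : ℕ) : ℝ) ^ (i + 1) ≤ ((t : ℝ) ^ 2) ^ i := by
    rw [ht, Nat.add_sub_cancel, ← pow_mul]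
    norm_cast
    rcases t.eq_zero_or_pos with rfl | htpos
    · simp
    · exact Nat.pow_le_pow_right htpos (by omega)
  calc |Cnki n k i| ≤ (2 * k + n) + ((k + n - 1 : ℕ) : ℝ) ^ (i + 1) :=
        (abs_sub _ _).trans
          (add_le_add (abs_Cnki_rational_part_le hn hi) (abs_Cnki_power_sum_part_le hi))
    _ ≤ (2 * t + 1) ^ i + ((t : ℝ) ^ 2) ^ i := add_le_add hrat hsum
    _ ≤ (2 * t + 1 + (t : ℝ) ^ 2) ^ i := pow_add_pow_le (by positivity) (by positivity) (by omega)
    _ = ((k + n : ℝ) ^ 2) ^ i := by rw [hkn]; ring_nf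

end Coefficients

section LeadingTerm

lemma leadingTerm_nonneg (n l : ℕ) : 0 ≤ leadingTerm n l := by
  unfold leadingTerm
  positivity

lemma factorial_add_le_factorial_mul_pow (k r : ℕ) :
    Nat.factorial (k + r) ≤ Nat.factorial k * (k + r) ^ r := by
  rw [← Nat.factorial_mul_ascFactorial]
  exact Nat.mul_le_mul_left _ (Nat.ascFactorial_le_pow_add k r)

lemma add_one_pow_le_mul_exp_pow (k r N : ℕ) :
    (k + 1 : ℝ) ^ N ≤ (k + r + 1) ^ N * exp (-(N / (k + r + 1))) ^ r := by
  have hbase : (k + 1 : ℝ) ≤ (k + r + 1) * exp (-(r / (k + r + 1))) := by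
    calc (k + 1 : ℝ) = (k + r + 1) * (1 - r / (k + r + 1)) := by field_simp; ring
      _ ≤ (k + r + 1) * exp (-(r / (k + r + 1))) := by
        gcongr
        exact one_sub_le_exp_neg _
  calc (k + 1 : ℝ) ^ N ≤ ((k + r + 1) * exp (-(r / (k + r + 1)))) ^ N := by gcongr
    _ = (k + r + 1) ^ N * exp (-(N / (k + r + 1))) ^ r := by
      rw [mul_pow, ← exp_nat_mul, ← exp_nat_mul]
      ring_nf

lemma leadingTerm_le_exp_pow_mul {n : ℕ} (hn : 1 ≤ n) (k r : ℕ) :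
    leadingTerm n k ≤ exp (-((n - 1) / (k + r + 1))) ^ r * leadingTerm n (k + r) := by
  obtain ⟨N, rfl⟩ := Nat.exists_eq_add_of_le' hn
  have hfac : (Nat.factorial (k + r + 1) : ℝ) ≤ Nat.factorial (k + 1) * (k + r + 1) ^ r := by
    have := factorial_add_le_factorial_mul_pow (k + 1) r
    rw [add_right_comm] at this
    exact_mod_cast this
  have hpow := add_one_pow_le_mul_exp_pow k r N
  have hk : (k + 1 : ℝ) ^ k ≤ (k + r + 1) ^ k := by
    gcongr
    exact le_add_of_nonneg_right r.cast_nonneg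
  simp only [leadingTerm, ← add_assoc, Nat.add_sub_cancel]
  push_cast
  rw [add_sub_cancel_right, ← mul_div_assoc, div_le_div_iff₀ (by positivity) (by positivity)]
  calc (k + 1 : ℝ) ^ (k + N) * Nat.factorial (k + r + 1)
      ≤ (k + r + 1) ^ k * ((k + r + 1) ^ N * exp (-(N / (k + r + 1))) ^ r) *
          (Nat.factorial (k + 1) * (k + r + 1) ^ r) := by
        rw [pow_add]
        gcongr
    _ = exp (-(N / (k + r + 1))) ^ r * (k + r + 1) ^ (k + r + N) * Nat.factorial (k + 1) := by
        ring

end LeadingTerm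

section GeometricBound

variable {n l : ℕ}

lemma a_eq_sum_leadingTerm_mul_expCoeff (n l : ℕ) :
    a n l = ∑ k ∈ range (l + 1), leadingTerm n k * expCoeff (Cnki n k) (l - k) := rfl

lemma a_sub_leadingTerm_eq_sum (n l : ℕ) :
    a n l - leadingTerm n l =
      ∑ r ∈ Ico 1 (l + 1), leadingTerm n (l - r) * expCoeff (Cnki n (l - r)) r := by
  have hflip : a n l =
      ∑ r ∈ range (l + 1), leadingTerm n (l - r) * expCoeff (Cnki n (l - r)) r := by
    rw [a_eq_sum_leadingTerm_mul_expCoeff, ← sum_flip]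
    refine sum_congr rfl fun r hr ↦ ?_
    rw [Nat.sub_sub_self (mem_range_succ_iff.1 hr)]
  rw [hflip, range_eq_Ico, sum_eq_sum_Ico_succ_bot l.succ_pos, Nat.sub_zero, expCoeff_zero,
    mul_one, add_sub_cancel_left]

/-- The base of the geometric series bounding the relative error of `leadingTerm n l`: the factor
`e (l + n) ^ 2` comes from the coefficients `C(n,k,i)`, the exponential from the decay of
`leadingTerm`. -/
noncomputable def errorRatio (n l : ℕ) : ℝ :=
  exp 1 * (l + n : ℝ) ^ 2 * exp (-((n - 1) / (l + 1)))

lemma errorRatio_nonneg (n l : ℕ) : 0 ≤ errorRatio n l := by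
  unfold errorRatio
  positivity

lemma abs_leadingTerm_mul_expCoeff_le (hn : 1 ≤ n) (k r : ℕ) :
    |leadingTerm n k * expCoeff (Cnki n k) r| ≤
      leadingTerm n (k + r) * errorRatio n (k + r) ^ r := by
  have hcoeff : |expCoeff (Cnki n k) r| ≤ (exp 1 * (k + n : ℝ) ^ 2) ^ r :=
    abs_expCoeff_le (fun i hi ↦ abs_Cnki_le hn hi) r
  have hlead := leadingTerm_le_exp_pow_mul hn k r
  have hM := leadingTerm_nonneg n (k + r)
  rw [abs_mul, abs_of_nonneg (leadingTerm_nonneg n k)]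
  calc leadingTerm n k * |expCoeff (Cnki n k) r|
      ≤ (exp (-((n - 1) / (k + r + 1))) ^ r * leadingTerm n (k + r)) *
          (exp 1 * (k + r + n : ℝ) ^ 2) ^ r := by
        gcongr
        refine hcoeff.trans ?_
        gcongr
        exact le_add_of_nonneg_right r.cast_nonneg
    _ = leadingTerm n (k + r) * errorRatio n (k + r) ^ r := by
        rw [errorRatio, mul_pow _ (exp _)]
        push_cast
        ring

lemma abs_a_sub_leadingTerm_le_sum (hn : 1 ≤ n) (l : ℕ) :
    |a n l - leadingTerm n l| ≤ leadingTerm n l * ∑ r ∈ Ico 1 (l + 1), errorRatio n l ^ r := by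
  rw [a_sub_leadingTerm_eq_sum, mul_sum]
  refine (abs_sum_le_sum_abs _ _).trans (sum_le_sum fun r hr ↦ ?_)
  have hrl : r ≤ l := Nat.lt_succ_iff.1 (mem_Ico.1 hr).2
  simpa only [Nat.sub_add_cancel hrl] using abs_leadingTerm_mul_expCoeff_le hn (l - r) r

lemma abs_a_sub_leadingTerm_le_two_mul (hn : 1 ≤ n) (hq : errorRatio n l ≤ 1 / 2) :
    |a n l - leadingTerm n l| ≤ 2 * errorRatio n l * leadingTerm n l := by
  have hq0 := errorRatio_nonneg n l
  have hM := leadingTerm_nonneg n l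
  calc |a n l - leadingTerm n l|
      ≤ leadingTerm n l * ∑ r ∈ Ico 1 (l + 1), errorRatio n l ^ r :=
        abs_a_sub_leadingTerm_le_sum hn l
    _ ≤ leadingTerm n l * (errorRatio n l ^ 1 / (1 - errorRatio n l)) := by
        gcongr
        exact geom_sum_Ico_le_of_lt_one hq0 (by linarith)
    _ ≤ leadingTerm n l * (2 * errorRatio n l) := by
        gcongr
        rw [pow_one, div_le_iff₀ (by linarith)]
        nlinarith
    _ = 2 * errorRatio n l * leadingTerm n l := mul_comm _ _

end GeometricBound

section Range

variable {n l : ℕ} {α c : ℝ}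

lemma errorRatio_le_div_rpow (hn : 1 ≤ n) (hln : l ≤ n)
    (hl : (α + 2) * log n * (l + 1) ≤ n - 1) :
    errorRatio n l ≤ 4 * exp 1 / (n : ℝ) ^ α := by
  have hn0 : (0 : ℝ) < n := mod_cast hn
  have hln' : (l : ℝ) ≤ n := mod_cast hln
  have hexp : exp (-((n - 1) / (l + 1))) ≤ (n : ℝ) ^ (-(α + 2)) := by
    rw [rpow_def_of_pos hn0, exp_le_exp, mul_neg, neg_le_neg_iff, mul_comm]
    exact (le_div_iff₀ (by positivity)).2 hl
  calc errorRatio n l ≤ exp 1 * (n + n : ℝ) ^ 2 * (n : ℝ) ^ (-(α + 2)) := by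
        unfold errorRatio
        gcongr
    _ = 4 * exp 1 / (n : ℝ) ^ α := by
        rw [rpow_neg hn0.le, rpow_add hn0, rpow_two]
        field_simp
        ring

lemma mul_log_add_one_le_mul {A δ x : ℝ} (hA : 0 ≤ A) (hδ : 0 < δ) (hx : 1 ≤ x)
    (h : ((2 * A + 1) / δ) ^ 2 ≤ x) : A * log x + 1 ≤ δ * x := by
  have hlog : log x ≤ 2 * √x := by
    have := log_le_self (sqrt_nonneg x)
    rw [log_sqrt (by linarith)] at this
    linarith
  have hsqrt : 1 ≤ √x := one_le_sqrt.2 hx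
  have hle : 2 * A + 1 ≤ δ * √x := (div_le_iff₀' hδ).1 (le_sqrt_of_sq_le h)
  calc A * log x + 1 ≤ A * (2 * √x) + √x := by gcongr
    _ = (2 * A + 1) * √x := by ring
    _ ≤ δ * √x * √x := by gcongr
    _ = δ * x := by rw [mul_assoc, mul_self_sqrt (by linarith)]

lemma mul_log_mul_add_one_le_sub_one {A x y : ℝ} (hA : 0 ≤ A) (hc : A < c) (hx : 1 < x)
    (hxA : ((2 * A + 1) / (1 - A / c)) ^ 2 ≤ x) (hy : y ≤ x / (c * log x)) :
    A * log x * (y + 1) ≤ x - 1 := by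
  have hc0 : 0 < c := hA.trans_lt hc
  have hmul : y * (c * log x) ≤ x := (le_div_iff₀ (mul_pos hc0 (log_pos hx))).1 hy
  have hlog := mul_log_add_one_le_mul hA (sub_pos.2 ((div_lt_one hc0).2 hc)) hx.le hxA
  calc A * log x * (y + 1) = A / c * (y * (c * log x)) + A * log x := by field_simp
    _ ≤ A / c * x + ((1 - A / c) * x - 1) := by
        gcongr
        linarith
    _ = x - 1 := by ring

lemma abs_a_sub_leadingTerm_le_div_rpow (hn : 2 ≤ n) (hα : 0 ≤ α)
    (hnα : 8 * exp 1 ≤ (n : ℝ) ^ α) (hl : (α + 2) * log n * (l + 1) ≤ n - 1) :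
    |a n l - leadingTerm n l| ≤ 8 * exp 1 / (n : ℝ) ^ α * leadingTerm n l := by
  have hlog : 1 / 2 ≤ log n := by
    have : log 2 ≤ log n := log_le_log two_pos (mod_cast hn)
    linarith [log_two_gt_d9]
  have hln : l ≤ n := by
    have hone : 1 ≤ (α + 2) * log n := by nlinarith
    have : (l : ℝ) + 1 ≤ n - 1 := (le_mul_of_one_le_left (by positivity) hone).trans hl
    exact_mod_cast (by linarith : (l : ℝ) ≤ n)
  have hq := errorRatio_le_div_rpow (by omega) hln hl
  have hhalf : 4 * exp 1 / (n : ℝ) ^ α ≤ 1 / 2 := by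
    rw [div_le_iff₀ ((by positivity : 0 < 8 * exp 1).trans_le hnα)]
    linarith
  have hM := leadingTerm_nonneg n l
  calc |a n l - leadingTerm n l| ≤ 2 * errorRatio n l * leadingTerm n l :=
        abs_a_sub_leadingTerm_le_two_mul (by omega) (hq.trans hhalf)
    _ ≤ 2 * (4 * exp 1 / (n : ℝ) ^ α) * leadingTerm n l := by gcongr
    _ = 8 * exp 1 / (n : ℝ) ^ α * leadingTerm n l := by ring

end Range

theorem stmt1_general {α c : ℝ} (hα : 0 < α) (hc : α + 2 < c) :
    ∃ C' : ℝ, 0 < C' ∧ ∃ N : ℕ, 0 < N ∧ ∀ n l : ℕ, N < n →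
      (l : ℝ) ≤ (n : ℝ) / (c * Real.log n) →
      |a n l - (l + 1 : ℝ) ^ (l + n - 1) / (Nat.factorial (l + 1) : ℝ)| ≤
        (C' / (n : ℝ) ^ α) *
          ((l + 1 : ℝ) ^ (l + n - 1) / (Nat.factorial (l + 1) : ℝ)) := by
  -- `M₁` ensures `8 e ≤ n ^ α`, and `M₂` that `(α + 2) log n + 1 ≤ (1 - (α + 2) / c) n`.
  let M₁ : ℝ := (8 * exp 1) ^ α⁻¹
  let M₂ : ℝ := ((2 * (α + 2) + 1) / (1 - (α + 2) / c)) ^ 2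
  refine ⟨8 * exp 1, by positivity, ⌈max M₁ M₂⌉₊ + 1, Nat.succ_pos _, fun n l hn hl ↦ ?_⟩
  have hmax : max M₁ M₂ ≤ n := (Nat.le_ceil _).trans (mod_cast by omega)
  obtain ⟨h₁, h₂⟩ := max_le_iff.1 hmax
  have hnα : 8 * exp 1 ≤ (n : ℝ) ^ α :=
    (rpow_inv_le_iff_of_pos (by positivity) n.cast_nonneg hα).1 h₁
  have hn1 : (1 : ℝ) < n := mod_cast (by omega : 1 < n)
  exact abs_a_sub_leadingTerm_le_div_rpow (by omega) hα.le hnα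
    (mul_log_mul_add_one_le_sub_one (by positivity) hc hn1 h₂ hl)

/-- **Theorem (refined asymptotic with explicit error bound).** There are effectively
computable constants `C' > 0` and `N > 0` such that for all integers `n > N` and
`0 ≤ l ≤ n / (10 log n)`,
`|a(n,l) − (l+1)^{l+n−1}/(l+1)!| ≤ (C'/n²) · (l+1)^{l+n−1}/(l+1)!`. -/
theorem stmt1 :
    ∃ C' : ℝ, 0 < C' ∧ ∃ N : ℕ, 0 < N ∧ ∀ n l : ℕ, N < n →
      (l : ℝ) ≤ (n : ℝ) / (10 * Real.log n) →
      |a n l - (l + 1 : ℝ) ^ (l + n - 1) / (Nat.factorial (l + 1) : ℝ)| ≤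
        (C' / (n : ℝ) ^ 2) *
          ((l + 1 : ℝ) ^ (l + n - 1) / (Nat.factorial (l + 1) : ℝ)) := by
  simpa only [rpow_two] using stmt1_general (α := 2) (c := 10) two_pos (by norm_num)
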